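/- Let A be a complete Heyting algebra, ι an index type, and q : ι → A a family of elements. Then the infimum over all x in A of ((⨅ i, (q i ⇨ x)) ⇨ x) equals the supremum ⨆ i, q i. (This says the impredicative second-order encoding ∀P. (∀a. Q a → P) → P of the existential quantifier is interpreted as the indexed join.) -/

import Mathlib

theorem isLeast_range_himp_himp {α : Type*} [GeneralizedHeytingAlgebra α] (a : α) :
    IsLeast (Set.range fun x : α => (a ⇨ x) ⇨ x) a :=
  ⟨⟨a, by simp only [himp_self, top_himp]⟩, Set.forall_mem_range.2 fun _ => le_himp_himp⟩

theorem stmt_10 {A : Type*} [Order.Frame A] {ι : Type*} (q : ι → A) :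
    ⨅ x : A, ((⨅ i, (q i ⇨ x)) ⇨ x) = ⨆ i, q i := by
  simp only [← iSup_himp_eq]
  exact (isLeast_range_himp_himp (⨆ i, q i)).isGLB.iInf_eq
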